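/- Let (Δ, π) be a balanced simplicial complex of dimension d−1 over a field k. Then depth k[Δ] = min{ i + |S| : S ⊆ [d], H̃_{i−1}(Δ_{[d]−S}; k) ≠ 0 }, where Δ_{[d]−S} is the rank selected subcomplex obtained by removing the ranks in S. -/

import Mathlib

open Finset

/-- An abstract simplicial complex on vertex type `V`, given by a finite, downward closed
family of finite subsets of `V` (its faces). -/
structure SComplex (V : Type) [DecidableEq V] where
  faces : Finset (Finset V)
  down_closed : ∀ ⦃s t : Finset V⦄, s ∈ faces → t ⊆ s → t ∈ faces

namespace SComplex

variable {V : Type} [DecidableEq V]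

/-- `K.rank = d = dim k[Δ] = dim Δ + 1` is the maximal cardinality of a face of `K`. -/
def rank (K : SComplex V) : ℕ := K.faces.sup Finset.card

/-- `F` is a facet (maximal face) of `K`. -/
def IsFacet (K : SComplex V) (F : Finset V) : Prop :=
  F ∈ K.faces ∧ ∀ G ∈ K.faces, F ⊆ G → F = G

/-- `K` is pure: all facets have the maximal cardinality `K.rank`. -/
def Pure (K : SComplex V) : Prop := ∀ F : Finset V, K.IsFacet F → F.card = K.rank

/-- The link `lk_K(T) = {G ∈ K | T ∪ G ∈ K, T ∩ G = ∅}`. -/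
def link (K : SComplex V) (T : Finset V) : SComplex V where
  faces := K.faces.filter fun G => Disjoint T G ∧ T ∪ G ∈ K.faces
  down_closed := by
    intro s t hs hts
    simp only [Finset.mem_filter] at hs ⊢
    exact ⟨K.down_closed hs.1 hts, hs.2.1.mono_right hts,
      K.down_closed hs.2.2 (Finset.union_subset_union_right hts)⟩

/-- The anti-star `ast_K(T) = {G ∈ K | T ∩ G = ∅}`. -/
def antistar (K : SComplex V) (T : Finset V) : SComplex V where
  faces := K.faces.filter fun G => Disjoint T G
  down_closed := by
    intro s t hs hts
    simp only [Finset.mem_filter] at hs ⊢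
    exact ⟨K.down_closed hs.1 hts, hs.2.mono_right hts⟩

/-- The induced subcomplex of `K` on a set `W` of vertices. -/
def restrict (K : SComplex V) (W : Finset V) : SComplex V where
  faces := K.faces.filter fun G => G ⊆ W
  down_closed := by
    intro s t hs hts
    simp only [Finset.mem_filter] at hs ⊢
    exact ⟨K.down_closed hs.1 hts, hts.trans hs.2⟩

/-- The subcomplex of faces of cardinality at most `m`; as cardinality = dimension + 1, this is
the `(m-1)`-skeleton `Δ^{(m-1)}`. -/
def skelCard (K : SComplex V) (m : ℕ) : SComplex V where
  faces := K.faces.filter fun G => G.card ≤ m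
  down_closed := by
    intro s t hs hts
    simp only [Finset.mem_filter] at hs ⊢
    exact ⟨K.down_closed hs.1 hts, le_trans (Finset.card_le_card hts) hs.2⟩

/-- `K.trunc j` is `[Δ]_{>j}`, the order complex of the poset of faces of `K` of cardinality
(equivalently, of height in the face poset) `> j`: its faces are the chains of such faces.
For `j = 0` this is the barycentric subdivision of `K`. -/
def trunc (K : SComplex V) (j : ℕ) : SComplex (Finset V) where
  faces := K.faces.powerset.filter fun C =>
    (∀ s ∈ C, j < s.card) ∧ ∀ s ∈ C, ∀ t ∈ C, s ⊆ t ∨ t ⊆ s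
  down_closed := by
    intro s t hs hts
    simp only [Finset.mem_powerset, Finset.mem_filter] at hs ⊢
    exact ⟨hts.trans hs.1, fun a ha => hs.2.1 a (hts ha),
      fun a ha b hb => hs.2.2 a (hts ha) b (hts hb)⟩

/-- `Δ_A`: the complex obtained from `K` by deleting all faces containing a member of `A`. -/
def deleteAbove (K : SComplex V) (A : Finset (Finset V)) : SComplex V where
  faces := K.faces.filter fun s => ∀ τ ∈ A, ¬ τ ⊆ s
  down_closed := by
    intro s t hs hts
    simp only [Finset.mem_filter] at hs ⊢
    exact ⟨K.down_closed hs.1 hts, fun τ hτ hsub => hs.2 τ hτ (hsub.trans hts)⟩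

/-- The number of faces of `K` of cardinality `i`, i.e. the face number `f_{i-1}(K)`. -/
def faceCount (K : SComplex V) (i : ℕ) : ℕ := (K.faces.filter fun s => s.card = i).card

/-- The Euler characteristic `χ(K) = Σ_{i ≥ 0} (-1)^i f_i(K)`. -/
def eulerChar (K : SComplex V) : ℤ :=
  ∑ s ∈ K.faces.filter (fun s => s ≠ ∅), (-1 : ℤ) ^ (s.card - 1)

/-- The reduced Euler characteristic `χ̃(K) = χ(K) - 1`. -/
def reducedEulerChar (K : SComplex V) : ℤ := eulerChar K - 1

end SComplex

/-! ### Simplicial homology with coefficients in a field `k` -/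

/-- An arbitrary linear order on a finite type. -/
noncomputable def arbOrder (V : Type) [Fintype V] : LinearOrder V :=
  LinearOrder.lift' (Fintype.equivFin V) (Equiv.injective _)

namespace SComplex

variable {V : Type} [DecidableEq V]

/-- The faces of `K` of cardinality `n`, as a type. -/
def Faces (K : SComplex V) (n : ℕ) : Type :=
  {s : Finset V // s ∈ K.faces ∧ s.card = n}

/-- The space of reduced simplicial `n`-chains of `K`: formal `k`-linear combinations of the
faces of cardinality `n` (such a face has dimension `n - 1`; the empty face sits in degree `0`,
which produces *reduced* homology). -/
abbrev ChainsOf (k : Type) [Field k] (K : SComplex V) (n : ℕ) : Type := Faces K n →₀ k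

variable (k : Type) [Field k] [Fintype V]

/-- The simplicial boundary map, with signs determined by an arbitrary but fixed linear order
on the vertices. -/
noncomputable def bd (K : SComplex V) (n : ℕ) :
    ChainsOf k K n →ₗ[k] ChainsOf k K (n - 1) :=
  letI : LinearOrder V := arbOrder V
  Finsupp.lsum k fun s : Faces K n =>
    LinearMap.toSpanSingleton k (ChainsOf k K (n - 1))
      (∑ x ∈ s.1.attach,
        ((-1 : k) ^ (s.1.filter (fun y => y < x.1)).card) •
          Finsupp.single
            (⟨s.1.erase x.1,
              K.down_closed s.2.1 (Finset.erase_subset _ _),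
              by rw [Finset.card_erase_of_mem x.2, s.2.2]⟩ : Faces K (n - 1))
            (1 : k))

/-- `HVanish k K i` says that the reduced simplicial homology `H̃_{i-1}(K; k)` vanishes.
Note the indexing convention: the index `i` is the *cardinality* of the relevant faces, so this
is reduced homology in topological degree `i - 1`; e.g. `HVanish k K 1` says `H̃₀(K; k) = 0`
(`K` is connected and nonempty) and `HVanish k K 0` says `H̃₋₁(K; k) = 0` (`K` has a face).
Since the cycles in degree `i - 1` are `ker ∂ᵢ` and the boundaries are `im ∂ᵢ₊₁`, and the
boundaries are always contained in the cycles, vanishing of homology says exactly that every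
cycle is a boundary. -/
def HVanish (K : SComplex V) (i : ℕ) : Prop :=
  LinearMap.ker (bd k K i) ≤ LinearMap.range (bd k K (i + 1))

/-- `redHomologyRank k K i` is the dimension `dim_k H̃_{i-1}(K; k)` of the reduced simplicial
homology of `K` in topological degree `i - 1` (cardinality index `i`), namely the dimension of
the cycles `ker ∂ᵢ` modulo the boundaries `im ∂ᵢ₊₁`. -/
noncomputable def redHomologyRank (K : SComplex V) (i : ℕ) : ℕ :=
  Module.finrank k ↥(LinearMap.ker (bd k K i)) -
    Module.finrank k ↥(LinearMap.range (bd k K (i + 1)) ⊓ LinearMap.ker (bd k K i))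

end SComplex

/-! ### Depth, Serre conditions, and Stanley–Reisner rings -/

/-- The length of a longest regular sequence on `R` contained in the ideal `I`
(the `I`-depth of `R`). -/
noncomputable def depthIn (R : Type) [CommRing R] (I : Ideal R) : ℕ :=
  sSup {n : ℕ | ∃ rs : List R, rs.length = n ∧ (∀ r ∈ rs, r ∈ I) ∧
    RingTheory.Sequence.IsRegular R rs}

/-- Serre's condition `(S_ℓ)` for a commutative ring:
`depth R_p ≥ min {ℓ, dim R_p}` for every prime `p`. -/
def SerreCondS (ℓ : ℕ) (R : Type) [CommRing R] : Prop :=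
  ∀ (p : Ideal R) (hp : p.IsPrime),
    haveI := hp
    min ((ℓ : ℕ∞) : WithBot ℕ∞) (ringKrullDim (Localization.AtPrime p)) ≤
      ((depthIn (Localization.AtPrime p)
        (IsLocalRing.maximalIdeal (Localization.AtPrime p)) : ℕ∞) : WithBot ℕ∞)

namespace SComplex

variable {V : Type} [DecidableEq V] (k : Type) [Field k]

/-- The Stanley–Reisner ideal of `K`: generated by the squarefree monomials supported on
non-faces. -/
noncomputable def srIdeal (K : SComplex V) : Ideal (MvPolynomial V k) :=
  Ideal.span ((fun s : Finset V => ∏ v ∈ s, MvPolynomial.X v) '' {s : Finset V | s ∉ K.faces})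

/-- The Stanley–Reisner ring `k[Δ]`. -/
noncomputable abbrev SRRing (K : SComplex V) : Type := MvPolynomial V k ⧸ srIdeal k K

/-- `depth k[Δ]`: the depth of the Stanley–Reisner ring with respect to its irrelevant
(graded maximal) ideal. -/
noncomputable def srDepth (K : SComplex V) : ℕ :=
  depthIn (SRRing k K)
    (Ideal.span (Set.range fun v : V => Ideal.Quotient.mk (srIdeal k K) (MvPolynomial.X v)))

/-- `k[Δ]` satisfies Serre's condition `(S_ℓ)`. -/
def SerreS (ℓ : ℕ) (K : SComplex V) : Prop := SerreCondS ℓ (SRRing k K)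

end SComplex

/-! ### Order complexes of finite posets -/

/-- The order complex `O(P)` of a finite poset: its faces are the chains of `P`. -/
def orderComplex (P : Type) [DecidableEq P] [Fintype P] [PartialOrder P]
    [∀ a b : P, Decidable (a ≤ b)] : SComplex P where
  faces := Finset.univ.filter fun C : Finset P => ∀ a ∈ C, ∀ b ∈ C, a ≤ b ∨ b ≤ a
  down_closed := by
    intro s t hs hts
    simp only [Finset.mem_filter, Finset.mem_univ, true_and] at hs ⊢
    exact fun a ha b hb => hs a (hts ha) b (hts hb)

/-- The height of an element of a finite poset: the maximal cardinality of a chain with top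
element `p` (so minimal elements have height `1`). -/
def pheight {P : Type} [DecidableEq P] [Fintype P] [PartialOrder P]
    [∀ a b : P, Decidable (a ≤ b)] (p : P) : ℕ :=
  Finset.sup (Finset.univ.filter fun C : Finset P =>
    p ∈ C ∧ (∀ a ∈ C, a ≤ p) ∧ ∀ a ∈ C, ∀ b ∈ C, a ≤ b ∨ b ≤ a) Finset.card

/-- The height `ht P` of a finite poset: the maximal cardinality of a chain. -/
def pheightMax (P : Type) [DecidableEq P] [Fintype P] [PartialOrder P]
    [∀ a b : P, Decidable (a ≤ b)] : ℕ :=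
  Finset.univ.sup (pheight (P := P))

/-- `O(P_{>j})`: the full subcomplex of the order complex on the elements of height `> j`. -/
def ocAbove (P : Type) [DecidableEq P] [Fintype P] [PartialOrder P]
    [∀ a b : P, Decidable (a ≤ b)] (j : ℕ) : SComplex P :=
  (orderComplex P).restrict (Finset.univ.filter fun p => j < pheight p)

/-- The face poset `F(Δ)` of a simplicial complex: the nonempty faces, ordered by inclusion. -/
abbrev SComplex.FacePoset {V : Type} [DecidableEq V] (K : SComplex V) : Type :=
  {s : Finset V // s ∈ K.faces ∧ s ≠ ∅}

instance {V : Type} [DecidableEq V] (K : SComplex V) :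
    ∀ a b : K.FacePoset, Decidable (a ≤ b) := fun a b =>
  decidable_of_iff (a.1 ≤ b.1) Subtype.coe_le_coe

/-! ### Koszul cochains -/

section Koszul

open scoped Pointwise

variable {ι : Type} [LinearOrder ι]

/-- The sign with which `j` is removed from (or inserted into) `U`. -/
def koszulSign (U : Finset ι) (j : ι) : ℤ := (-1) ^ (U.filter (· < j)).card

lemma koszulSign_mul_self (U : Finset ι) (j : ι) : koszulSign U j * koszulSign U j = 1 := by
  simp [koszulSign, ← mul_pow]

lemma koszulSign_erase_self (U : Finset ι) (j : ι) :
    koszulSign (U.erase j) j = koszulSign U j := by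
  unfold koszulSign
  congr 2
  ext i
  simp only [mem_filter, mem_erase]
  exact ⟨fun h => ⟨h.1.2, h.2⟩, fun h => ⟨⟨h.2.ne, h.1⟩, h.2⟩⟩

lemma koszulSign_erase_of_lt {U : Finset ι} {i j : ι} (hij : i < j) :
    koszulSign (U.erase j) i = koszulSign U i := by
  unfold koszulSign
  congr 2
  ext l
  simp only [mem_filter, mem_erase]
  exact ⟨fun h => ⟨h.1.2, h.2⟩, fun h => ⟨⟨(h.2.trans hij).ne, h.1⟩, h.2⟩⟩

lemma koszulSign_erase_of_gt {U : Finset ι} {i j : ι} (hi : i ∈ U) (hij : i < j) :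
    koszulSign (U.erase i) j = -koszulSign U j := by
  unfold koszulSign
  have h1 : (U.erase i).filter (· < j) = (U.filter (· < j)).erase i := by
    ext l
    simp only [mem_filter, mem_erase]
    tauto
  have h2 : i ∈ U.filter (· < j) := by simp [hi, hij]
  rw [h1, ← Finset.card_erase_add_one h2, pow_succ]
  ring

lemma koszulSign_anticomm {U : Finset ι} {i j : ι} (hi : i ∈ U) (hj : j ∈ U) (hij : i ≠ j) :
    koszulSign U i * koszulSign (U.erase i) j = -(koszulSign U j * koszulSign (U.erase j) i) := by
  rcases lt_or_gt_of_ne hij with h | h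
  · rw [koszulSign_erase_of_lt h, koszulSign_erase_of_gt hi h]
    ring
  · rw [koszulSign_erase_of_lt h, koszulSign_erase_of_gt hj h]
    ring

variable {R : Type} [CommRing R] (θ : ι → R)

/-- The Koszul differential on cochains with values in `M`, for the elements `θ`. -/
def koszulD (M : Type) [AddCommGroup M] [Module R M] :
    (Finset ι → M) →ₗ[R] (Finset ι → M) where
  toFun f U := ∑ j ∈ U, koszulSign U j • θ j • f (U.erase j)
  map_add' f g := by
    ext U
    simp [smul_add, Finset.sum_add_distrib]
  map_smul' r f := by
    ext U
    simp only [Pi.smul_apply, RingHom.id_apply, Finset.smul_sum]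
    refine Finset.sum_congr rfl fun j _ => ?_
    rw [smul_comm r, smul_comm r]

variable {M : Type} [AddCommGroup M] [Module R M]

lemma koszulD_apply (f : Finset ι → M) (U : Finset ι) :
    koszulD θ M f U = ∑ j ∈ U, koszulSign U j • θ j • f (U.erase j) := rfl

lemma koszulD_koszulD (f : Finset ι → M) : koszulD θ M (koszulD θ M f) = 0 := by
  ext U
  simp only [koszulD_apply, Finset.smul_sum, Pi.zero_apply]
  rw [Finset.sum_sigma']
  refine Finset.sum_involution (fun a _ => ⟨a.2, a.1⟩) ?_ ?_ ?_ ?_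
  · rintro ⟨i, j⟩ h
    simp only [mem_sigma, mem_erase] at h
    obtain ⟨hi, hji, hj⟩ := h
    dsimp only
    rw [Finset.erase_right_comm (a := j) (b := i)]
    have key := koszulSign_anticomm hi hj (Ne.symm hji)
    have h1 : ∀ (a b : ℤ) (x y : R) (m : M), a • x • b • y • m = (a * b) • (x * y) • m := by
      intro a b x y m
      rw [smul_comm x b, smul_smul, smul_smul]
    rw [h1, h1, key, mul_comm (θ j), neg_smul, neg_add_cancel]
  · rintro ⟨i, j⟩ h _ heq
    simp only [mem_sigma, mem_erase] at h
    simp only [Sigma.mk.injEq, heq_eq_eq] at heq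
    exact h.2.1 heq.1
  · rintro ⟨i, j⟩ h
    simp only [mem_sigma, mem_erase] at h ⊢
    exact ⟨h.2.2, h.2.1.symm, h.1⟩
  · rintro ⟨i, j⟩ h
    rfl

/-- Contraction of Koszul cochains along the index `j`. -/
def koszulContract (j : ι) (f : Finset ι → M) (U : Finset ι) : M :=
  if j ∈ U then 0 else koszulSign U j • f (insert j U)

lemma koszulD_contract_add (j : ι) (f : Finset ι → M) :
    koszulD θ M (koszulContract j f) + koszulContract j (koszulD θ M f) = θ j • f := by
  ext U
  simp only [Pi.add_apply, Pi.smul_apply]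
  by_cases hj : j ∈ U
  · rw [koszulD_apply, Finset.sum_eq_single_of_mem j hj]
    · simp only [koszulContract, hj, if_true, notMem_erase, if_false, add_zero,
        Finset.insert_erase hj]
      rw [koszulSign_erase_self, smul_comm (θ j), smul_smul, koszulSign_mul_self, one_smul]
    · intro i _ hij
      simp [koszulContract, hj, Ne.symm hij]
  · simp only [koszulContract, hj, if_false]
    rw [koszulD_apply, koszulD_apply, Finset.sum_insert hj, Finset.erase_insert hj, smul_add,
      ← koszulSign_erase_self (insert j U) j, Finset.erase_insert hj, smul_smul,
      koszulSign_mul_self, one_smul, add_left_comm, Finset.smul_sum, ← Finset.sum_add_distrib]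
    conv_rhs => rw [← add_zero (θ j • f U)]
    congr 1
    refine Finset.sum_eq_zero fun i hi => ?_
    have hij : i ≠ j := fun h => hj (h ▸ hi)
    have h1 : (insert j U).erase i = insert j (U.erase i) := by
      rw [Finset.erase_insert_of_ne hij.symm]
    have h2 : j ∉ U.erase i := fun h => hj (Finset.mem_of_mem_erase h)
    simp only [koszulContract, h2, if_false, h1]
    have key := koszulSign_anticomm (Finset.mem_insert_self j U)
      (Finset.mem_insert_of_mem hi) hij.symm
    rw [← koszulSign_erase_self (insert j U) j, Finset.erase_insert hj, h1] at key
    have h4 : koszulSign (insert j (U.erase i)) j = koszulSign (U.erase i) j := by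
      rw [← koszulSign_erase_self (insert j _) j, Finset.erase_insert h2]
    rw [h4] at key
    have h5 := koszulSign_mul_self U j
    have h6 := koszulSign_mul_self (U.erase i) j
    have h7 : koszulSign U i * koszulSign (U.erase i) j +
        koszulSign U j * koszulSign (insert j U) i = 0 := by
      linear_combination koszulSign U j * koszulSign (U.erase i) j * key -
        koszulSign U i * koszulSign (U.erase i) j * h5 -
        koszulSign U j * koszulSign (insert j U) i * h6
    rw [smul_comm (θ i), smul_smul, smul_smul, ← add_smul, h7, zero_smul]

/-- The Koszul cohomology of `θ` with values in `M` vanishes in degree `p`. -/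
def KoszulVanish (M : Type) [AddCommGroup M] [Module R M] (p : ℕ) : Prop :=
  ∀ f : Finset ι → M, (∀ U, f U ≠ 0 → U.card = p) → koszulD θ M f = 0 →
    ∃ g : Finset ι → M, (∀ U, g U ≠ 0 → U.card + 1 = p) ∧ koszulD θ M g = f

lemma card_of_koszulD_ne_zero {f : Finset ι → M} {p : ℕ} (hf : ∀ U, f U ≠ 0 → U.card = p)
    {U : Finset ι} (h : koszulD θ M f U ≠ 0) : U.card = p + 1 := by
  obtain ⟨j, hj, hne⟩ := Finset.exists_ne_zero_of_sum_ne_zero h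
  have h1 : f (U.erase j) ≠ 0 := fun h0 => hne (by simp [h0])
  rw [← hf _ h1, Finset.card_erase_add_one hj]

lemma exists_koszulD_eq_smul {f : Finset ι → M} {p : ℕ} (hf : ∀ U, f U ≠ 0 → U.card = p)
    (hD : koszulD θ M f = 0) {r : R} (hr : r ∈ Ideal.span (Set.range θ)) :
    ∃ g : Finset ι → M, (∀ U, g U ≠ 0 → U.card + 1 = p) ∧ koszulD θ M g = r • f := by
  induction hr using Submodule.span_induction with
  | mem x hx =>
    obtain ⟨j, rfl⟩ := hx
    refine ⟨koszulContract j f, fun U hU => ?_, ?_⟩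
    · by_cases hj : j ∈ U
      · simp [koszulContract, hj] at hU
      · rw [← hf (insert j U) fun h0 => hU (by simp [koszulContract, h0]),
          Finset.card_insert_of_notMem hj]
    · have h0 : koszulContract j (0 : Finset ι → M) = 0 := by
        ext U
        simp [koszulContract]
      rw [← koszulD_contract_add, hD, h0, add_zero]
  | zero => exact ⟨0, by simp, by simp⟩
  | add x y _ _ hx hy =>
    obtain ⟨g, hg, hgD⟩ := hx
    obtain ⟨g', hg', hgD'⟩ := hy
    refine ⟨g + g', fun U hU => ?_, by rw [map_add, hgD, hgD', add_smul]⟩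
    by_cases h0 : g U = 0
    · exact hg' U fun h1 => hU (by simp [h0, h1])
    · exact hg U h0
  | smul a x _ hx =>
    obtain ⟨g, hg, hgD⟩ := hx
    refine ⟨a • g, fun U hU => hg U fun h0 => hU (by simp [h0]), ?_⟩
    rw [map_smul, hgD, smul_assoc]

lemma koszulD_map {N : Type} [AddCommGroup N] [Module R N] (φ : M →ₗ[R] N) (f : Finset ι → M) :
    koszulD θ N (fun U => φ (f U)) = fun U => φ (koszulD θ M f U) := by
  ext U
  simp [koszulD_apply]

lemma exists_lift_quotSMulTop {α : Type} (x : R) {f : α → QuotSMulTop x M} {P : α → Prop}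
    (hf : ∀ U, f U ≠ 0 → P U) :
    ∃ g : α → M, (∀ U, g U ≠ 0 → P U) ∧
      ∀ U, (x • (⊤ : Submodule R M)).mkQ (g U) = f U := by
  classical
  choose g hg using fun U => Submodule.mkQ_surjective (x • (⊤ : Submodule R M)) (f U)
  refine ⟨fun U => if f U = 0 then 0 else g U, fun U hU => hf U fun h0 => hU (by simp [h0]),
    fun U => ?_⟩
  by_cases h0 : f U = 0
  · simp [h0]
  · simp only [h0, if_false, hg]

lemma exists_eq_smul_of_mkQ_eq_zero {α : Type} (x : R) {f : α → M} {P : α → Prop}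
    (hP : ∀ U, f U ≠ 0 → P U)
    (hf : ∀ U, (x • (⊤ : Submodule R M)).mkQ (f U) = 0) :
    ∃ g : α → M, (∀ U, g U ≠ 0 → P U) ∧ x • g = f := by
  classical
  have h : ∀ U, ∃ m : M, x • m = f U := fun U => by
    have := hf U
    rw [Submodule.mkQ_apply, Submodule.Quotient.mk_eq_zero,
      Submodule.mem_smul_pointwise_iff_exists] at this
    obtain ⟨m, -, hm⟩ := this
    exact ⟨m, hm⟩
  choose g hg using h
  refine ⟨fun U => if f U = 0 then 0 else g U, fun U hU => hP U fun h0 => hU (by simp [h0]), ?_⟩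
  ext U
  by_cases h0 : f U = 0
  · simp [h0]
  · simp [h0, hg]

lemma IsSMulRegular.funext_smul {α : Type} {x : R} (hx : IsSMulRegular M x) {f g : α → M}
    (h : x • f = x • g) : f = g :=
  funext fun a => hx (congrFun h a)

lemma KoszulVanish.of_quotSMulTop {x : R} (hx : IsSMulRegular M x)
    (hrad : x ∈ (Ideal.span (Set.range θ)).radical) {n : ℕ}
    (h : ∀ p < n, KoszulVanish θ (QuotSMulTop x M) p) {p : ℕ} (hp : p < n + 1) :
    KoszulVanish θ M p := by
  intro f hf hD
  have step : ∀ f : Finset ι → M, (∀ U, f U ≠ 0 → U.card = p) → koszulD θ M f = 0 →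
      (∃ g : Finset ι → M, (∀ U, g U ≠ 0 → U.card + 1 = p) ∧ koszulD θ M g = x • f) →
      ∃ g : Finset ι → M, (∀ U, g U ≠ 0 → U.card + 1 = p) ∧ koszulD θ M g = f := by
    rintro f hf hD ⟨g, hg, hgD⟩
    rcases p with - | p
    · have hg0 : g = 0 := funext fun U => by_contra fun h0 => by simpa using hg U h0
      rw [hg0, map_zero] at hgD
      refine ⟨0, by simp, ?_⟩
      rw [map_zero]
      exact hx.funext_smul (by rw [smul_zero, hgD])
    · obtain ⟨u, hu, huD⟩ := h p (by omega)
        (fun U => (x • (⊤ : Submodule R M)).mkQ (g U))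
        (fun U hU => by
          have := hg U fun h0 => hU (by simp [h0])
          omega)
        (by
          rw [koszulD_map, hgD]
          ext U
          rw [Pi.smul_apply, Submodule.mkQ_apply, Pi.zero_apply, Submodule.Quotient.mk_eq_zero]
          exact Submodule.smul_mem_pointwise_smul _ _ _ trivial)
      obtain ⟨v, hv, hvu⟩ := exists_lift_quotSMulTop x hu
      obtain ⟨w, hw, hwg⟩ := exists_eq_smul_of_mkQ_eq_zero x (f := g - koszulD θ M v)
        (P := fun U => U.card + 1 = p + 1)
        (fun U hU => by
          by_cases h0 : g U = 0
          · have := card_of_koszulD_ne_zero θ (p := p - 1) (f := v)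
              (fun U hU => by have := hv U hU; omega) (U := U)
              fun h1 => hU (by simp [h0, h1])
            by_cases hp0 : p = 0
            · have hv0 : v = 0 := funext fun U => by_contra fun h0 => by
                have := hv U h0
                omega
              exact absurd (by simp [h0, hv0]) hU
            · omega
          · exact hg U h0)
        (fun U => by
          have h1 := congrFun (koszulD_map θ (x • (⊤ : Submodule R M)).mkQ v) U
          simp only [hvu] at h1
          rw [Pi.sub_apply, map_sub, ← h1]
          exact sub_eq_zero.mpr (congrFun huD U).symm)
      refine ⟨w, hw, hx.funext_smul ?_⟩
      rw [← map_smul, hwg, map_sub, koszulD_koszulD, sub_zero, hgD]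
  obtain ⟨N, hN⟩ := hrad
  have hxN := exists_koszulD_eq_smul θ hf hD hN
  clear hN
  induction N with
  | zero => simpa using hxN
  | succ N ih =>
    refine ih (step (x ^ N • f) (fun U hU => hf U fun h0 => hU (by simp [h0]))
      (by rw [map_smul, hD, smul_zero]) ?_)
    rwa [pow_succ', mul_smul] at hxN

lemma KoszulVanish.quotSMulTop {x : R} (hx : IsSMulRegular M x) {p : ℕ}
    (h : KoszulVanish θ M p) (h' : KoszulVanish θ M (p + 1)) :
    KoszulVanish θ (QuotSMulTop x M) p := by
  intro f hf hD
  obtain ⟨v, hv, hvf⟩ := exists_lift_quotSMulTop x hf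
  obtain ⟨w, hw, hwv⟩ := exists_eq_smul_of_mkQ_eq_zero x (f := koszulD θ M v)
    (P := fun U => U.card = p + 1) (fun U hU => card_of_koszulD_ne_zero θ hv hU)
    (fun U => by
      have h1 := congrFun (koszulD_map θ (x • (⊤ : Submodule R M)).mkQ v) U
      simp only [hvf] at h1
      rw [← h1]
      exact congrFun hD U)
  obtain ⟨g, hg, hgD⟩ := h' w hw (hx.funext_smul
    (by rw [← map_smul, hwv, koszulD_koszulD, smul_zero]))
  obtain ⟨u, hu, huD⟩ := h (v - x • g)
    (fun U hU => by
      by_cases h0 : v U = 0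
      · have := hg U fun h1 => hU (by simp [h0, h1])
        omega
      · exact hv U h0)
    (by rw [map_sub, map_smul, hgD, hwv, sub_self])
  refine ⟨fun U => (x • (⊤ : Submodule R M)).mkQ (u U),
    fun U hU => hu U fun h0 => hU (by simp [h0]), ?_⟩
  rw [koszulD_map, huD]
  ext U
  rw [Pi.sub_apply, map_sub, hvf, sub_eq_self, Submodule.mkQ_apply,
    Submodule.Quotient.mk_eq_zero]
  exact Submodule.smul_mem_pointwise_smul _ _ _ trivial

open RingTheory.Sequence in
lemma koszulVanish_of_isWeaklyRegular (rs : List R)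
    (hrs : ∀ r ∈ rs, r ∈ (Ideal.span (Set.range θ)).radical) (M : Type) [AddCommGroup M]
    [Module R M] (h : IsWeaklyRegular M rs) : ∀ p < rs.length, KoszulVanish θ M p := by
  induction rs generalizing M with
  | nil => simp
  | cons x rs ih =>
    rw [isWeaklyRegular_cons_iff] at h
    intro p hp
    exact KoszulVanish.of_quotSMulTop θ h.1 (hrs x (by simp))
      (ih (fun r hr => hrs r (by simp [hr])) _ h.2) hp

lemma exists_isSMulRegular_of_koszulVanish [Fintype ι] [IsNoetherianRing R]
    [Module.Finite R M] (h : KoszulVanish θ M 0) :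
    ∃ x ∈ Ideal.span (Set.range θ), IsSMulRegular M x := by
  have hsub : Subsingleton ((R ⧸ Ideal.span (Set.range θ)) →ₗ[R] M) := by
    refine subsingleton_of_forall_eq 0 fun φ => ?_
    have h1 : ∀ j, θ j • φ 1 = 0 := fun j => by
      have : θ j • (1 : R ⧸ Ideal.span (Set.range θ)) = 0 := by
        rw [← map_one (Ideal.Quotient.mk _), ← Ideal.Quotient.mk_eq_mk,
          ← Submodule.Quotient.mk_smul, Submodule.Quotient.mk_eq_zero]
        simpa using Ideal.subset_span (Set.mem_range_self j)
      rw [← map_smul, this, map_zero]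
    obtain ⟨g, hg, hgD⟩ := h (fun U => if U = ∅ then φ 1 else 0)
      (fun U hU => by
        by_contra h0
        exact hU (if_neg fun h1 => h0 (by simp [h1])))
      (by
        ext U
        rw [koszulD_apply, Pi.zero_apply]
        refine Finset.sum_eq_zero fun j _ => ?_
        split_ifs
        · rw [h1, smul_zero]
        · simp)
    have hφ : φ 1 = 0 := by
      have := congrFun hgD ∅
      simpa [koszulD_apply] using this.symm
    refine LinearMap.ext fun y => ?_
    obtain ⟨r, rfl⟩ := Ideal.Quotient.mk_surjective y
    have : Ideal.Quotient.mk (Ideal.span (Set.range θ)) r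
        = r • (1 : R ⧸ Ideal.span (Set.range θ)) := by
      rw [Algebra.smul_def, mul_one]
      rfl
    rw [this, map_smul, hφ, smul_zero, LinearMap.zero_apply]
  obtain ⟨x, hx, hreg⟩ := IsSMulRegular.subsingleton_linearMap_iff.mp hsub
  rw [Ideal.annihilator_quotient] at hx
  exact ⟨x, hx, hreg⟩

open RingTheory.Sequence in
lemma exists_isWeaklyRegular_of_koszulVanish [Fintype ι] [IsNoetherianRing R] (n : ℕ)
    (M : Type) [AddCommGroup M] [Module R M] [Module.Finite R M]
    (h : ∀ p < n, KoszulVanish θ M p) :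
    ∃ rs : List R, rs.length = n ∧ (∀ r ∈ rs, r ∈ Ideal.span (Set.range θ)) ∧
      IsWeaklyRegular M rs := by
  induction n generalizing M with
  | zero => exact ⟨[], rfl, by simp, by simp⟩
  | succ n ih =>
    obtain ⟨x, hx, hreg⟩ := exists_isSMulRegular_of_koszulVanish θ (h 0 (by omega))
    obtain ⟨rs, hlen, hmem, hrs⟩ := ih (QuotSMulTop x M) fun p hp =>
      KoszulVanish.quotSMulTop θ hreg (h p (by omega)) (h (p + 1) (by omega))
    refine ⟨x :: rs, by simp [hlen], ?_, (isWeaklyRegular_cons_iff M x rs).mpr ⟨hreg, hrs⟩⟩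
    simpa [hx] using hmem

open RingTheory.Sequence in
/-- Depth sensitivity of the Koszul complex. -/
lemma depthIn_eq_sInf_koszul [Fintype ι] [IsNoetherianRing R] {I : Ideal R} (hI : I ≠ ⊤)
    (hθ : ∀ j, θ j ∈ I) (hrad : I ≤ (Ideal.span (Set.range θ)).radical)
    (hne : ∃ p, ¬ KoszulVanish θ R p) :
    depthIn R I = sInf {p | ¬ KoszulVanish θ R p} := by
  have hle : Ideal.span (Set.range θ) ≤ I := Ideal.span_le.mpr (by rintro _ ⟨j, rfl⟩; exact hθ j)
  refine IsGreatest.csSup_eq ⟨?_, ?_⟩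
  · obtain ⟨rs, hlen, hmem, hrs⟩ := exists_isWeaklyRegular_of_koszulVanish θ
      (sInf {p | ¬ KoszulVanish θ R p}) R fun p hp => by
        simpa using Nat.notMem_of_lt_sInf hp
    refine ⟨rs, hlen, fun r hr => hle (hmem r hr), hrs, fun h => hI ?_⟩
    rw [eq_top_iff]
    rw [smul_eq_mul, Ideal.mul_top] at h
    rw [h]
    exact Ideal.span_le.mpr fun r hr => hle (hmem r hr)
  · rintro n ⟨rs, rfl, hmem, hrs⟩
    by_contra! hlt
    exact Nat.sInf_mem hne (koszulVanish_of_isWeaklyRegular θ rs (fun r hr => hrad (hmem r hr)) R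
      hrs.toIsWeaklyRegular _ hlt)

end Koszul

/-! ### Coordinates on the Stanley–Reisner ring -/

namespace SComplex

section Coordinates

variable {V : Type} [DecidableEq V]

/-- The exponent vector of the squarefree monomial supported on `F`. -/
noncomputable def sqfree (F : Finset V) : V →₀ ℕ := Finsupp.indicator F fun _ _ => 1

lemma sqfree_apply (F : Finset V) (v : V) : sqfree F v = if v ∈ F then 1 else 0 := by
  simp [sqfree, Finsupp.indicator_apply]

@[simp]
lemma support_sqfree (F : Finset V) : (sqfree F).support = F := by
  ext v
  simp [sqfree_apply]

lemma sqfree_sub_single {F : Finset V} (v : V) :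
    sqfree F - Finsupp.single v 1 = sqfree (F.erase v) := by
  ext w
  rw [Finsupp.tsub_apply, sqfree_apply, sqfree_apply, Finsupp.single_apply]
  by_cases h : v = w
  · subst h
    simp only [if_true, notMem_erase, if_false]
    split_ifs <;> rfl
  · simp [h, Ne.symm h]

lemma sqfree_support_eq {a : V →₀ ℕ} (h : ∀ v ∈ a.support, a v = 1) : sqfree a.support = a := by
  ext v
  rw [sqfree_apply]
  split_ifs with hv
  · exact (h v hv).symm
  · exact (Finsupp.notMem_support_iff.mp hv).symm

variable (k : Type) [Field k]

lemma prod_X_eq_monomial_sqfree (F : Finset V) :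
    ∏ v ∈ F, (MvPolynomial.X v : MvPolynomial V k) = MvPolynomial.monomial (sqfree F) 1 := by
  rw [MvPolynomial.monomial_eq, MvPolynomial.C_1, one_mul, Finsupp.prod, support_sqfree]
  refine Finset.prod_congr rfl fun v hv => ?_
  simp [sqfree_apply, hv]

lemma mem_srIdeal_iff (K : SComplex V) (p : MvPolynomial V k) :
    p ∈ srIdeal k K ↔ ∀ a : V →₀ ℕ, a.support ∈ K.faces → p.coeff a = 0 := by
  have h : srIdeal k K = Ideal.span ((fun a => MvPolynomial.monomial a (1 : k)) ''
      (sqfree '' {s : Finset V | s ∉ K.faces})) := by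
    rw [srIdeal, Set.image_image]
    simp only [prod_X_eq_monomial_sqfree]
  rw [h, MvPolynomial.mem_ideal_span_monomial_image]
  constructor
  · intro hp a ha
    by_contra h0
    obtain ⟨_, ⟨s, hs, rfl⟩, hle⟩ := hp a (MvPolynomial.mem_support_iff.mpr h0)
    refine hs (K.down_closed ha fun v hv => ?_)
    have := hle v
    rw [sqfree_apply, if_pos hv] at this
    rw [Finsupp.mem_support_iff]
    omega
  · intro hp a ha
    refine ⟨_, ⟨a.support, fun hs => MvPolynomial.mem_support_iff.mp ha (hp a hs), rfl⟩, ?_⟩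
    intro v
    rw [sqfree_apply]
    split_ifs with hv
    · rw [Finsupp.mem_support_iff] at hv
      omega
    · exact Nat.zero_le _

variable {k} {K : SComplex V}

/-- The coefficient of the monomial with exponent vector `a` in an element of `k[Δ]`. -/
noncomputable def srCoeff (a : V →₀ ℕ) (r : SRRing k K) : k :=
  if a.support ∈ K.faces then (Quotient.out r).coeff a else 0

lemma srCoeff_of_notMem {a : V →₀ ℕ} (ha : a.support ∉ K.faces) (r : SRRing k K) :
    srCoeff a r = 0 := if_neg ha

lemma srCoeff_mk {a : V →₀ ℕ} (ha : a.support ∈ K.faces) (p : MvPolynomial V k) :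
    srCoeff a (Ideal.Quotient.mk (srIdeal k K) p) = p.coeff a := by
  rw [srCoeff, if_pos ha]
  have h : Ideal.Quotient.mk (srIdeal k K) (Quotient.out (Ideal.Quotient.mk (srIdeal k K) p))
      = Ideal.Quotient.mk (srIdeal k K) p := Quotient.out_eq _
  have := (mem_srIdeal_iff k K _).mp (Ideal.Quotient.eq.mp h) a ha
  rwa [MvPolynomial.coeff_sub, sub_eq_zero] at this

lemma srCoeff_ext {r s : SRRing k K}
    (h : ∀ a : V →₀ ℕ, a.support ∈ K.faces → srCoeff a r = srCoeff a s) : r = s := by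
  obtain ⟨p, rfl⟩ := Ideal.Quotient.mk_surjective r
  obtain ⟨q, rfl⟩ := Ideal.Quotient.mk_surjective s
  rw [Ideal.Quotient.eq, mem_srIdeal_iff]
  intro a ha
  have := h a ha
  rwa [srCoeff_mk ha, srCoeff_mk ha, ← sub_eq_zero, ← MvPolynomial.coeff_sub] at this

lemma srCoeff_add (a : V →₀ ℕ) (r s : SRRing k K) :
    srCoeff a (r + s) = srCoeff a r + srCoeff a s := by
  by_cases ha : a.support ∈ K.faces
  · obtain ⟨p, rfl⟩ := Ideal.Quotient.mk_surjective r
    obtain ⟨q, rfl⟩ := Ideal.Quotient.mk_surjective s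
    rw [← map_add, srCoeff_mk ha, srCoeff_mk ha, srCoeff_mk ha, MvPolynomial.coeff_add]
  · simp [srCoeff_of_notMem ha]

variable (k K) in
/-- `srCoeff a` as a homomorphism of additive groups. -/
noncomputable def srCoeffHom (a : V →₀ ℕ) : SRRing k K →+ k :=
  AddMonoidHom.mk' (srCoeff a) (srCoeff_add a)

lemma srCoeff_zero (a : V →₀ ℕ) : srCoeff a (0 : SRRing k K) = 0 := map_zero (srCoeffHom k K a)

lemma srCoeff_sum {α : Type} (s : Finset α) (a : V →₀ ℕ) (f : α → SRRing k K) :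
    srCoeff a (∑ i ∈ s, f i) = ∑ i ∈ s, srCoeff a (f i) := map_sum (srCoeffHom k K a) f s

lemma srCoeff_zsmul (a : V →₀ ℕ) (n : ℤ) (r : SRRing k K) :
    srCoeff a (n • r) = n * srCoeff a r := by
  rw [← zsmul_eq_mul]
  exact map_zsmul (srCoeffHom k K a) n r

lemma srCoeff_X_mul {a : V →₀ ℕ} (ha : a.support ∈ K.faces) (v : V) (r : SRRing k K) :
    srCoeff a (Ideal.Quotient.mk (srIdeal k K) (MvPolynomial.X v) * r) =
      if v ∈ a.support then srCoeff (a - Finsupp.single v 1) r else 0 := by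
  obtain ⟨p, rfl⟩ := Ideal.Quotient.mk_surjective r
  have h : (a - Finsupp.single v 1).support ∈ K.faces :=
    K.down_closed ha (Finsupp.support_mono tsub_le_self)
  rw [← map_mul, srCoeff_mk ha, srCoeff_mk h, MvPolynomial.coeff_X_mul']

lemma finite_srCoeff_ne_zero (r : SRRing k K) : {a | srCoeff a r ≠ 0}.Finite := by
  obtain ⟨p, rfl⟩ := Ideal.Quotient.mk_surjective r
  refine p.support.finite_toSet.subset fun a ha => ?_
  by_cases h : a.support ∈ K.faces
  · rw [Set.mem_ofPred_eq, srCoeff_mk h] at ha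
    exact MvPolynomial.mem_support_iff.mpr ha
  · exact absurd (srCoeff_of_notMem h _) ha

lemma exists_srCoeff_eq (u : (V →₀ ℕ) → k) (hfin : {a | u a ≠ 0}.Finite)
    (hface : ∀ a, u a ≠ 0 → a.support ∈ K.faces) : ∃ r : SRRing k K, ∀ a, srCoeff a r = u a := by
  refine ⟨Ideal.Quotient.mk _ (∑ b ∈ hfin.toFinset, MvPolynomial.monomial b (u b)), fun a => ?_⟩
  by_cases ha : a.support ∈ K.faces
  · rw [srCoeff_mk ha, MvPolynomial.coeff_sum]
    simp only [MvPolynomial.coeff_monomial]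
    rw [Finset.sum_ite_eq']
    split_ifs with h
    · rfl
    · by_contra h0
      exact h (hfin.mem_toFinset.mpr (Ne.symm h0))
  · rw [srCoeff_of_notMem ha]
    by_contra h
    exact ha (hface a (Ne.symm h))

lemma exists_srCoeff_ne_zero {r : SRRing k K} (hr : r ≠ 0) : ∃ a, srCoeff a r ≠ 0 := by
  by_contra! h
  exact hr (srCoeff_ext fun a _ => by rw [h, srCoeff_zero])

end Coordinates

section Colors

variable {V : Type} [DecidableEq V] [Fintype V] {ι : Type} [LinearOrder ι]
  (k : Type) [Field k] (K : SComplex V) (c : V → ι)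

/-- The sum of the variables of colour `j` in `k[Δ]`. -/
noncomputable def colorSum (j : ι) : SRRing k K :=
  ∑ v with c v = j, Ideal.Quotient.mk (srIdeal k K) (MvPolynomial.X v)

variable {k K}

lemma srCoeff_colorSum_mul {a : V →₀ ℕ} (ha : a.support ∈ K.faces) (j : ι) (r : SRRing k K) :
    srCoeff a (colorSum k K c j * r) =
      ∑ v ∈ a.support with c v = j, srCoeff (a - Finsupp.single v 1) r := by
  rw [colorSum, Finset.sum_mul, srCoeff_sum]
  simp only [srCoeff_X_mul ha]
  rw [← Finset.sum_filter, Finset.filter_filter]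
  refine Finset.sum_congr ?_ fun _ _ => rfl
  ext v
  simp [and_comm]

lemma srCoeff_koszulD {a : V →₀ ℕ} (ha : a.support ∈ K.faces) (f : Finset ι → SRRing k K)
    (U : Finset ι) :
    srCoeff a (koszulD (colorSum k K c) _ f U) =
      ∑ v ∈ a.support with c v ∈ U, (koszulSign U (c v) : k) *
        srCoeff (a - Finsupp.single v 1) (f (U.erase (c v))) := by
  rw [koszulD_apply, srCoeff_sum]
  simp only [srCoeff_zsmul, smul_eq_mul, srCoeff_colorSum_mul c ha, Finset.mul_sum]
  rw [← Finset.sum_fiberwise_of_maps_to (s := a.support.filter (c · ∈ U)) (t := U) (g := c)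
    (fun v hv => (Finset.mem_filter.mp hv).2)]
  refine Finset.sum_congr rfl fun j hj => ?_
  refine Finset.sum_congr ?_ ?_
  · ext v
    simp only [mem_filter]
    exact ⟨fun h => ⟨⟨h.1, h.2 ▸ hj⟩, h.2⟩, fun h => ⟨h.1.1, h.2⟩⟩
  · intro v hv
    rw [(Finset.mem_filter.mp hv).2]

end Colors

end SComplex

/-! ### Simplicial cochains -/

namespace SComplex

section Cochains

variable {V : Type} [DecidableEq V] (k : Type) [Field k]

/-- Exactness, at the faces of cardinality `i`, of the simplicial cochain complex of `K` with
incidence numbers `s`. -/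
def CochainVanish (K : SComplex V) (s : Finset V → V → ℤ) (i : ℕ) : Prop :=
  ∀ φ : Finset V → k,
    (∀ F ∈ K.faces, F.card = i + 1 → ∑ v ∈ F, (s F v : k) * φ (F.erase v) = 0) →
    ∃ ψ : Finset V → k, ∀ F ∈ K.faces, F.card = i → ∑ v ∈ F, (s F v : k) * ψ (F.erase v) = φ F

variable {k} {K : SComplex V}

lemma CochainVanish.of_rescale {s t : Finset V → V → ℤ} {σ : Finset V → ℤ} {i : ℕ}
    (hσ : ∀ F, σ F * σ F = 1)
    (hst : ∀ F ∈ K.faces, ∀ v ∈ F, t F v * σ (F.erase v) = s F v * σ F)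
    (h : CochainVanish k K s i) : CochainVanish k K t i := by
  have hσk : ∀ F, (σ F : k) * σ F = 1 := fun F => by rw [← Int.cast_mul, hσ, Int.cast_one]
  have hstk : ∀ F ∈ K.faces, ∀ v ∈ F, (t F v : k) * σ (F.erase v) = s F v * σ F :=
    fun F hF v hv => by rw [← Int.cast_mul, hst F hF v hv, Int.cast_mul]
  intro φ hφ
  obtain ⟨ψ, hψ⟩ := h (fun F => σ F * φ F) fun F hF hcard => by
    rw [← mul_zero (σ F : k), ← hφ F hF hcard, Finset.mul_sum]
    refine Finset.sum_congr rfl fun v hv => ?_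
    linear_combination φ (F.erase v) * (-((σ F : k) * σ (F.erase v)) * hstk F hF v hv
      + t F v * σ F * hσk (F.erase v) - s F v * σ (F.erase v) * hσk F)
  refine ⟨fun F => σ F * ψ F, fun F hF hcard => ?_⟩
  have := hψ F hF hcard
  rw [← one_mul (φ F), ← hσk F, mul_assoc, ← this, Finset.mul_sum]
  refine Finset.sum_congr rfl fun v hv => ?_
  linear_combination ψ (F.erase v) * hstk F hF v hv

lemma cochainVanish_iff_of_rescale {s t : Finset V → V → ℤ} {σ : Finset V → ℤ} {i : ℕ}
    (hσ : ∀ F, σ F * σ F = 1)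
    (hst : ∀ F ∈ K.faces, ∀ v ∈ F, t F v * σ (F.erase v) = s F v * σ F) :
    CochainVanish k K s i ↔ CochainVanish k K t i := by
  refine ⟨.of_rescale hσ hst, .of_rescale hσ fun F hF v hv => ?_⟩
  linear_combination (- σ F * σ (F.erase v)) * hst F hF v hv
    + (t F v * σ F) * hσ (F.erase v) - (s F v * σ (F.erase v)) * hσ F

/-- The set underlying a face. -/
def Faces.set {n : ℕ} (s : Faces K n) : Finset V := s.1

/-- The face given by a set. -/
def Faces.mk {n : ℕ} (F : Finset V) (h : F ∈ K.faces ∧ F.card = n) : Faces K n := ⟨F, h⟩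

lemma Faces.set_mem {n : ℕ} (s : Faces K n) : s.set ∈ K.faces ∧ s.set.card = n := s.2

lemma Faces.set_mk {n : ℕ} (F : Finset V) (h : F ∈ K.faces ∧ F.card = n) :
    (Faces.mk F h).set = F := rfl

lemma Faces.mk_set {n : ℕ} (s : Faces K n) (h) : Faces.mk s.set h = s := rfl

lemma Faces.erase_mem {n : ℕ} (s : Faces K n) {v : V} (hv : v ∈ s.set) :
    s.set.erase v ∈ K.faces ∧ (s.set.erase v).card = n - 1 :=
  ⟨K.down_closed s.set_mem.1 (Finset.erase_subset _ _),
    by rw [Finset.card_erase_of_mem hv, s.set_mem.2]⟩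

/-- The function on finite sets given by a linear form on chains, extended by zero. -/
noncomputable def dualFun (n : ℕ) (l : Module.Dual k (ChainsOf k K n)) (F : Finset V) : k :=
  if h : F ∈ K.faces ∧ F.card = n then l (Finsupp.single (Faces.mk F h) 1) else 0

lemma apply_single_eq_dualFun {n : ℕ} (l : Module.Dual k (ChainsOf k K n)) (s : Faces K n) :
    l (Finsupp.single s 1) = dualFun n l s.set := by
  rw [dualFun, dif_pos s.set_mem, Faces.mk_set]

variable [Fintype V]

/-- The incidence numbers used in the boundary map `bd`. -/
noncomputable def vertexSign (F : Finset V) (v : V) : ℤ :=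
  (-1) ^ (F.filter fun w => Fintype.equivFin V w < Fintype.equivFin V v).card

lemma bd_single (n : ℕ) (s : Faces K n) :
    bd k K n (Finsupp.single s 1) = ∑ x ∈ s.set.attach, (vertexSign s.set x.1 : k) •
      Finsupp.single (Faces.mk (s.set.erase x.1) (s.erase_mem x.2)) (1 : k) := by
  refine (Finsupp.lsum_single ..).trans ?_
  refine (one_smul _ _).trans ?_
  refine Finset.sum_congr rfl fun x _ => ?_
  refine congrArg (· • Finsupp.single (Faces.mk (s.set.erase x.1) (s.erase_mem x.2)) (1 : k)) ?_
  rw [vertexSign, Int.cast_pow, Int.cast_neg, Int.cast_one]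
  rfl

lemma dual_bd_single (n : ℕ) (l : Module.Dual k (ChainsOf k K (n - 1))) (φ : Finset V → k)
    (hl : ∀ s : Faces K (n - 1), l (Finsupp.single s 1) = φ s.set) (s : Faces K n) :
    (bd k K n).dualMap l (Finsupp.single s 1) =
      ∑ v ∈ s.set, (vertexSign s.set v : k) * φ (s.set.erase v) := by
  rw [LinearMap.dualMap_apply, bd_single, map_sum, ← Finset.sum_attach s.set]
  refine Finset.sum_congr rfl fun x _ => ?_
  rw [map_smul, hl, smul_eq_mul, Faces.set_mk]

lemma hVanish_iff_cochainVanish (i : ℕ) : HVanish k K i ↔ CochainVanish k K vertexSign i := by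
  have h1 : HVanish k K i ↔ LinearMap.ker (bd k K (i + 1)).dualMap ≤
      LinearMap.range (bd k K i).dualMap := by
    rw [LinearMap.range_dualMap_eq_dualAnnihilator_ker,
      LinearMap.ker_dualMap_eq_dualAnnihilator_range]
    exact (Subspace.dualAnnihilator_le_dualAnnihilator_iff (W := LinearMap.range _)).symm
  rw [h1]
  constructor
  · intro h φ hφ
    let l : Module.Dual k (ChainsOf k K i) := Finsupp.linearCombination k fun s => φ s.set
    have hl : ∀ s : Faces K i, l (Finsupp.single s 1) = φ s.set := fun s => by simp [l]
    obtain ⟨m, hm⟩ := h (x := l) (by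
      rw [LinearMap.mem_ker]
      refine Finsupp.lhom_ext' fun s => LinearMap.ext_ring ?_
      refine (dual_bd_single (i + 1) l φ hl s).trans ?_
      exact hφ s.set s.set_mem.1 s.set_mem.2)
    refine ⟨dualFun (i - 1) m, fun F hF hcard => ?_⟩
    have := dual_bd_single i m (dualFun (i - 1) m) (apply_single_eq_dualFun m)
      (Faces.mk F ⟨hF, hcard⟩)
    rwa [hm, hl, Faces.set_mk, eq_comm] at this
  · intro h l hl
    have hl' : ∀ s : Faces K i, l (Finsupp.single s 1) = dualFun i l s.set :=
      apply_single_eq_dualFun l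
    obtain ⟨ψ, hψ⟩ := h (dualFun i l) fun F hF hcard => by
      have := dual_bd_single (i + 1) l _ hl' (Faces.mk F ⟨hF, hcard⟩)
      rw [LinearMap.mem_ker.mp hl] at this
      exact this.symm
    let m : Module.Dual k (ChainsOf k K (i - 1)) := Finsupp.linearCombination k fun s => ψ s.set
    have hm : ∀ s : Faces K (i - 1), m (Finsupp.single s 1) = ψ s.set := fun s => by simp [m]
    refine ⟨m, Finsupp.lhom_ext' fun s => LinearMap.ext_ring ?_⟩
    refine (dual_bd_single i m ψ hm s).trans ?_
    rw [hψ s.set s.set_mem.1 s.set_mem.2, ← hl']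
    rfl

end Cochains

section Signs

/-- `-1` if `P` holds and `1` otherwise. -/
def signOf (P : Prop) [Decidable P] : ℤ := if P then -1 else 1

lemma signOf_mul_self (P : Prop) [Decidable P] : signOf P * signOf P = 1 := by
  unfold signOf
  split_ifs <;> rfl

lemma prod_signOf {α : Type} (s : Finset α) (P : α → Prop) [DecidablePred P] :
    ∏ x ∈ s, signOf (P x) = (-1) ^ (s.filter P).card := by
  simp [signOf, Finset.prod_ite]

lemma prod_mul_self_eq_one {α : Type} (s : Finset α) {f : α → ℤ} (h : ∀ x, f x * f x = 1) :
    (∏ x ∈ s, f x) * ∏ x ∈ s, f x = 1 := by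
  rw [← Finset.prod_mul_distrib]
  exact Finset.prod_eq_one fun x _ => h x

variable {V : Type} [Fintype V] {ι : Type} [LinearOrder ι] (c : V → ι)

/-- The sign comparing the vertex order with the colour order on `F`, where the colours in `S`
are put in front. -/
noncomputable def shuffleSign (S : Finset ι) (F : Finset V) : ℤ :=
  (∏ u ∈ F, ∏ w ∈ F, signOf (Fintype.equivFin V w < Fintype.equivFin V u ∧ c u < c w)) *
    ∏ u ∈ F, koszulSign S (c u)

lemma shuffleSign_mul_self (S : Finset ι) (F : Finset V) :
    shuffleSign c S F * shuffleSign c S F = 1 := by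
  rw [shuffleSign, mul_mul_mul_comm, prod_mul_self_eq_one, prod_mul_self_eq_one, one_mul]
  · exact fun u => koszulSign_mul_self S (c u)
  · exact fun u => prod_mul_self_eq_one _ fun w => signOf_mul_self _

lemma koszulSign_mul_shuffleSign [DecidableEq V] {S : Finset ι} {F : Finset V} (hF : Set.InjOn c F)
    (hS : ∀ v ∈ F, c v ∉ S) {v : V} (hv : v ∈ F) :
    koszulSign (F.image c ∪ S) (c v) * shuffleSign c S (F.erase v) =
      vertexSign F v * shuffleSign c S F := by
  obtain ⟨F, hvF, rfl⟩ : ∃ F' : Finset V, v ∉ F' ∧ insert v F' = F :=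
    ⟨F.erase v, by simp, Finset.insert_erase hv⟩
  have h1 : koszulSign ((insert v F).image c ∪ S) (c v) =
      (∏ w ∈ F, signOf (c w < c v)) * koszulSign S (c v) := by
    have hdisj : Disjoint ((insert v F).image c) S := by
      rw [Finset.disjoint_left]
      intro j hj
      obtain ⟨w, hw, rfl⟩ := Finset.mem_image.mp hj
      exact hS w hw
    unfold koszulSign
    rw [← prod_signOf, ← prod_signOf, Finset.prod_union hdisj, Finset.prod_image hF,
      Finset.prod_insert hvF]
    simp [signOf]
  have h2 : vertexSign (insert v F) v =
      ∏ w ∈ F, signOf (Fintype.equivFin V w < Fintype.equivFin V v) := by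
    rw [vertexSign, ← prod_signOf, Finset.prod_insert hvF]
    simp [signOf]
  rw [h1, h2, Finset.erase_insert hvF]
  simp only [shuffleSign, Finset.prod_insert hvF, Finset.prod_mul_distrib]
  have h3 : ∀ w ∈ F, signOf (c w < c v) =
      signOf (Fintype.equivFin V w < Fintype.equivFin V v) *
      (signOf (Fintype.equivFin V w < Fintype.equivFin V v ∧ c v < c w) *
        signOf (Fintype.equivFin V v < Fintype.equivFin V w ∧ c w < c v)) := by
    intro w hw
    have hne : w ≠ v := fun h => hvF (h ▸ hw)
    have hc : c w ≠ c v := fun h => hne (hF (by simp [hw]) (by simp) h)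
    have he : Fintype.equivFin V w ≠ Fintype.equivFin V v := fun h =>
      hne ((Fintype.equivFin V).injective h)
    rcases lt_or_gt_of_ne hc with h | h <;> rcases lt_or_gt_of_ne he with h' | h' <;>
      simp [signOf, h, h', h.not_gt, h'.not_gt]
  rw [Finset.prod_congr rfl h3]
  simp only [Finset.prod_mul_distrib]
  have h4 : signOf (Fintype.equivFin V v < Fintype.equivFin V v ∧ c v < c v) = 1 := by
    simp [signOf]
  rw [h4]
  ring

end Signs

end SComplex

/-! ### Koszul homology of the Stanley–Reisner ring -/

namespace SComplex

section ColorKoszul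

variable {V : Type} [DecidableEq V]

lemma support_sub_single_of_eq_one {a : V →₀ ℕ} {v : V} (hv : a v = 1) :
    (a - Finsupp.single v 1).support = a.support.erase v := by
  ext w
  simp only [Finsupp.mem_support_iff, Finsupp.tsub_apply, Finsupp.single_apply, mem_erase]
  by_cases h : v = w
  · subst h
    simp [hv]
  · simp [h, Ne.symm h]

variable {ι : Type} [LinearOrder ι] {c : V → ι}

lemma image_union_erase {F : Finset V} {S : Finset ι} (hF : Set.InjOn c F) {v : V} (hv : v ∈ F)
    (hS : c v ∉ S) : (F.image c ∪ S).erase (c v) = (F.erase v).image c ∪ S := by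
  ext j
  simp only [mem_erase, mem_union, mem_image]
  constructor
  · rintro ⟨hj, ⟨w, hw, rfl⟩ | hj'⟩
    · exact Or.inl ⟨w, ⟨fun h => hj (h ▸ rfl), hw⟩, rfl⟩
    · exact Or.inr hj'
  · rintro (⟨w, ⟨hwv, hw⟩, rfl⟩ | hj)
    · exact ⟨fun h => hwv (hF hw hv h), Or.inl ⟨w, hw, rfl⟩⟩
    · exact ⟨fun h => hS (h ▸ hj), Or.inr hj⟩

variable (c) in
/-- The exponent vector `a` is squarefree, its support has `i` elements with colours outside `S`,
and these colours together with `S` form the set `U`. -/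
def ColorSqfree (S U : Finset ι) (i : ℕ) (a : V →₀ ℕ) : Prop :=
  (∀ v ∈ a.support, a v = 1 ∧ c v ∉ S) ∧ a.support.image c ∪ S = U ∧ #a.support = i

lemma colorSqfree_sub_single_iff {S U : Finset ι} {i : ℕ} {a : V →₀ ℕ}
    (ha : Set.InjOn c a.support) {v : V} (hv : v ∈ a.support) (hU : c v ∈ U) :
    ColorSqfree c S (U.erase (c v)) i (a - Finsupp.single v 1) ↔ ColorSqfree c S U (i + 1) a := by
  constructor
  · rintro ⟨h1, h2, h3⟩
    have hSv : c v ∉ S := fun h => by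
      have : c v ∈ U.erase (c v) := h2 ▸ Finset.mem_union_right _ h
      simp at this
    have hv1 : a v = 1 := by
      by_contra h
      have hv' : v ∈ (a - Finsupp.single v 1).support := by
        rw [Finsupp.mem_support_iff] at hv ⊢
        rw [Finsupp.tsub_apply, Finsupp.single_eq_same]
        omega
      have : c v ∈ U.erase (c v) :=
        h2 ▸ Finset.mem_union_left _ (Finset.mem_image_of_mem _ hv')
      simp at this
    rw [support_sub_single_of_eq_one hv1] at h1 h2 h3
    refine ⟨fun w hw => ?_, ?_, ?_⟩
    · by_cases hwv : w = v
      · subst hwv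
        exact ⟨hv1, hSv⟩
      · have := h1 w (Finset.mem_erase.mpr ⟨hwv, hw⟩)
        rwa [Finsupp.tsub_apply, Finsupp.single_apply, if_neg (Ne.symm hwv), Nat.sub_zero] at this
    · rw [← Finset.insert_erase hU, ← h2, ← image_union_erase ha hv hSv, Finset.insert_erase]
      exact Finset.mem_union_left _ (Finset.mem_image_of_mem _ hv)
    · rw [← h3, Finset.card_erase_add_one hv]
  · rintro ⟨h1, h2, h3⟩
    rw [ColorSqfree, support_sub_single_of_eq_one (h1 v hv).1]
    refine ⟨fun w hw => ?_, ?_, ?_⟩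
    · obtain ⟨hwv, hw⟩ := Finset.mem_erase.mp hw
      rw [Finsupp.tsub_apply, Finsupp.single_apply, if_neg (Ne.symm hwv), Nat.sub_zero]
      exact h1 w hw
    · rw [← image_union_erase ha hv (h1 v hv).2, h2]
    · rw [Finset.card_erase_of_mem hv, h3, Nat.add_sub_cancel]

variable (c) in
/-- The vertices `v` of `a` for which `a` contains `v` and, if `U` contains the colour of `v`,
even contains `v` twice. -/
def excess (U : Finset ι) (a : V →₀ ℕ) : Finset V := a.support.filter fun v => c v ∈ U → 2 ≤ a v

lemma excess_erase {U : Finset ι} {a : V →₀ ℕ} (ha : Set.InjOn c a.support) {v : V}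
    (hv : v ∈ a.support) (hU : c v ∈ U) :
    excess c (U.erase (c v)) (a - Finsupp.single v 1) = excess c U a := by
  ext w
  simp only [excess, mem_filter, Finsupp.mem_support_iff, Finsupp.tsub_apply,
    Finsupp.single_apply, mem_erase]
  by_cases hwv : v = w
  · subst hwv
    simp only [if_true, ne_eq, not_true, false_imp_iff, and_true, hU, true_imp_iff]
    omega
  · rw [if_neg hwv, Nat.sub_zero]
    refine and_congr_right fun hw => ?_
    have : c w ≠ c v := fun h => hwv (ha hv (Finsupp.mem_support_iff.mpr hw) h.symm)
    simp [this]

variable [Fintype V] {k : Type} [Field k] {K : SComplex V}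

lemma srCoeff_sqfree_koszulD {S : Finset ι} {F : Finset V} (hF : F ∈ K.faces)
    (hc : Set.InjOn c F) (hS : ∀ v ∈ F, c v ∉ S) (f : Finset ι → SRRing k K) :
    srCoeff (sqfree F) (koszulD (colorSum k K c) _ f (F.image c ∪ S)) =
      ∑ v ∈ F, (koszulSign (F.image c ∪ S) (c v) : k) *
        srCoeff (sqfree (F.erase v)) (f ((F.erase v).image c ∪ S)) := by
  rw [srCoeff_koszulD c (by rwa [support_sqfree]), support_sqfree, Finset.filter_true_of_mem
    fun v hv => Finset.mem_union_left _ (Finset.mem_image_of_mem _ hv)]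
  refine Finset.sum_congr rfl fun v hv => ?_
  rw [sqfree_sub_single, image_union_erase hc hv (hS v hv)]

lemma mem_restrict_iff {S : Finset ι} {F : Finset V} :
    F ∈ (K.restrict (univ.filter (c · ∉ S))).faces ↔ F ∈ K.faces ∧ ∀ v ∈ F, c v ∉ S := by
  simp [restrict, Finset.subset_iff]

lemma cochainVanish_of_koszulVanish (hc : ∀ F ∈ K.faces, Set.InjOn c F) {p : ℕ}
    (h : KoszulVanish (colorSum k K c) (SRRing k K) p) {S : Finset ι} {i : ℕ} (hp : i + #S = p) :
    CochainVanish k (K.restrict (univ.filter (c · ∉ S)))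
      (fun F v => koszulSign (F.image c ∪ S) (c v)) i := by
  classical
  intro φ hφ
  have hex : ∀ U : Finset ι, ∃ r : SRRing k K, ∀ a, srCoeff a r =
      if a.support ∈ K.faces ∧ ColorSqfree c S U i a then φ a.support else 0 := fun U => by
    refine exists_srCoeff_eq _ ((K.faces.finite_toSet.image sqfree).subset fun a ha => ?_)
      fun a ha => ?_
    · obtain ⟨⟨hK, hgood⟩, -⟩ := ite_ne_right_iff.mp ha
      exact ⟨a.support, hK, sqfree_support_eq fun v hv => (hgood.1 v hv).1⟩
    · exact (ite_ne_right_iff.mp ha).1.1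
  choose f hf using hex
  obtain ⟨g, -, hg⟩ := h f
    (fun U hU => by
      obtain ⟨a, ha⟩ := exists_srCoeff_ne_zero hU
      rw [hf] at ha
      obtain ⟨⟨hK, h1, h2, h3⟩, -⟩ := ite_ne_right_iff.mp ha
      rw [← h2, Finset.card_union_of_disjoint, Finset.card_image_of_injOn (hc _ hK), h3, hp]
      rw [Finset.disjoint_left]
      intro j hj
      obtain ⟨v, hv, rfl⟩ := Finset.mem_image.mp hj
      exact (h1 v hv).2)
    (by
      funext U
      refine srCoeff_ext fun a ha => ?_
      rw [Pi.zero_apply, srCoeff_zero, srCoeff_koszulD c ha]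
      have hface : ∀ v, (a - Finsupp.single v 1).support ∈ K.faces := fun v =>
        K.down_closed ha (Finsupp.support_mono tsub_le_self)
      simp only [hf, hface, true_and]
      by_cases hgood : ColorSqfree c S U (i + 1) a
      · have hU : ∀ v ∈ a.support, c v ∈ U := fun v hv =>
          hgood.2.1 ▸ Finset.mem_union_left _ (Finset.mem_image_of_mem _ hv)
        rw [Finset.filter_true_of_mem hU, ← hφ a.support
          (mem_restrict_iff.mpr ⟨ha, fun v hv => (hgood.1 v hv).2⟩) hgood.2.2]
        refine Finset.sum_congr rfl fun v hv => ?_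
        simp only [if_pos ((colorSqfree_sub_single_iff (hc _ ha) hv (hU v hv)).mpr hgood),
          support_sub_single_of_eq_one (hgood.1 v hv).1, hgood.2.1]
      · refine Finset.sum_eq_zero fun v hv => ?_
        obtain ⟨hv, hU⟩ := Finset.mem_filter.mp hv
        rw [if_neg fun h => hgood ((colorSqfree_sub_single_iff (hc _ ha) hv hU).mp h), mul_zero])
  refine ⟨fun F => srCoeff (sqfree F) (g (F.image c ∪ S)), fun F hF hcard => ?_⟩
  obtain ⟨hF, hFS⟩ := mem_restrict_iff.mp hF
  rw [← srCoeff_sqfree_koszulD hF (hc F hF) hFS, hg, hf, support_sqfree, if_pos]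
  refine ⟨hF, fun v hv => ?_, by rw [support_sqfree], by rw [support_sqfree, hcard]⟩
  rw [support_sqfree] at hv
  exact ⟨by rw [sqfree_apply, if_pos hv], hFS v hv⟩

variable (c) in
open Classical in
/-- The coefficients of a cochain bounding the Koszul cocycle `f`, given cochains `ψ S` bounding
the squarefree parts of `f`. -/
noncomputable def boundingCoeff (f : Finset ι → SRRing k K) (ψ : Finset ι → Finset V → k)
    (B : Finset V) (U : Finset ι) (a : V →₀ ℕ) : k :=
  if h : B.Nonempty then
    if c h.choose ∈ U then 0 else (koszulSign U (c h.choose) : k) *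
      srCoeff (a + Finsupp.single h.choose 1) (f (insert (c h.choose) U))
  else ψ (U \ a.support.image c) a.support

lemma exists_bounding (f : Finset ι → SRRing k K) (ψ : Finset ι → Finset V → k) (p : ℕ) :
    ∃ g : Finset ι → SRRing k K, ∀ U a, srCoeff a (g U) =
      if a.support ∈ K.faces ∧ #U + 1 = p then boundingCoeff c f ψ (excess c U a) U a else 0 := by
  suffices hex : ∀ U : Finset ι, ∃ r : SRRing k K, ∀ a, srCoeff a r =
      if a.support ∈ K.faces ∧ #U + 1 = p then boundingCoeff c f ψ (excess c U a) U a else 0 by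
    choose g hg using hex
    exact ⟨g, hg⟩
  intro U
  refine exists_srCoeff_eq _ (Set.Finite.subset ((K.faces.finite_toSet.image sqfree).union
    (Set.finite_iUnion fun w : V => (finite_srCoeff_ne_zero (f (insert (c w) U))).preimage
      (add_left_injective (Finsupp.single w 1)).injOn)) fun a ha => ?_)
    fun a ha => (ite_ne_right_iff.mp ha).1.1
  obtain ⟨⟨hK, -⟩, ha⟩ := ite_ne_right_iff.mp ha
  by_cases hB : (excess c U a).Nonempty
  · refine Or.inr (Set.mem_iUnion.mpr ⟨hB.choose, fun h0 => ha ?_⟩)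
    rw [boundingCoeff, dif_pos hB, h0, mul_zero, ite_self]
  · refine Or.inl ⟨a.support, hK, sqfree_support_eq fun v hv => ?_⟩
    rw [Finset.not_nonempty_iff_eq_empty] at hB
    have : v ∉ excess c U a := by simp [hB]
    rw [excess, Finset.mem_filter] at this
    rw [Finsupp.mem_support_iff] at hv
    have : ¬ (c v ∈ U → 2 ≤ a v) := fun h => this ⟨Finsupp.mem_support_iff.mpr hv, h⟩
    push Not at this
    omega

lemma koszulVanish_of_cochainVanish (hc : ∀ F ∈ K.faces, Set.InjOn c F) {p : ℕ}
    (h : ∀ (S : Finset ι) (i : ℕ), i + #S = p →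
      CochainVanish k (K.restrict (univ.filter (c · ∉ S)))
        (fun F v => koszulSign (F.image c ∪ S) (c v)) i) :
    KoszulVanish (colorSum k K c) (SRRing k K) p := by
  intro f hfp hf
  have hψ : ∀ S : Finset ι, ∃ ψ : Finset V → k, ∀ F ∈ K.faces, (∀ v ∈ F, c v ∉ S) →
      #F + #S = p → ∑ v ∈ F, (koszulSign (F.image c ∪ S) (c v) : k) * ψ (F.erase v) =
        srCoeff (sqfree F) (f (F.image c ∪ S)) := fun S => by
    by_cases hS : #S ≤ p
    · obtain ⟨ψ, hψ⟩ := h S (p - #S) (Nat.sub_add_cancel hS)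
        (fun F => srCoeff (sqfree F) (f (F.image c ∪ S))) fun F hF _ => by
          obtain ⟨hF, hFS⟩ := mem_restrict_iff.mp hF
          rw [← srCoeff_sqfree_koszulD hF (hc F hF) hFS, hf, Pi.zero_apply, srCoeff_zero]
      exact ⟨ψ, fun F hF hFS hcard => hψ F (mem_restrict_iff.mpr ⟨hF, hFS⟩) (by omega)⟩
    · exact ⟨0, fun F _ _ hcard => absurd hcard (by omega)⟩
  choose ψ hψ using hψ
  obtain ⟨g, hg⟩ := exists_bounding (c := c) f ψ p
  have hgp : ∀ U, g U ≠ 0 → #U + 1 = p := fun U hU => by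
    obtain ⟨a, ha⟩ := exists_srCoeff_ne_zero hU
    rw [hg] at ha
    exact (ite_ne_right_iff.mp ha).1.2
  refine ⟨g, hgp, funext fun U => ?_⟩
  by_cases hU : #U = p
  swap
  · rw [not_imp_comm.mp (hfp U) hU, koszulD_apply]
    refine Finset.sum_eq_zero fun j hj => ?_
    rw [not_imp_comm.mp (hgp (U.erase j)) (by rwa [Finset.card_erase_add_one hj]), smul_zero,
      smul_zero]
  refine srCoeff_ext fun a ha => ?_
  have hca := hc _ ha
  have hsum : srCoeff a (koszulD (colorSum k K c) _ g U) =
      ∑ v ∈ a.support with c v ∈ U, (koszulSign U (c v) : k) *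
        boundingCoeff c f ψ (excess c U a) (U.erase (c v)) (a - Finsupp.single v 1) := by
    rw [srCoeff_koszulD c ha]
    refine Finset.sum_congr rfl fun v hv => ?_
    obtain ⟨hv, hvU⟩ := Finset.mem_filter.mp hv
    rw [hg, if_pos ⟨K.down_closed ha (Finsupp.support_mono tsub_le_self),
      by rwa [Finset.card_erase_add_one hvU]⟩, excess_erase hca hv hvU]
  rw [hsum]
  by_cases hB : (excess c U a).Nonempty
  · simp only [boundingCoeff, dif_pos hB]
    have hw := hB.choose_spec
    set w := hB.choose
    rw [excess, Finset.mem_filter] at hw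
    obtain ⟨hw, hw2⟩ := hw
    have hsq : (koszulSign U (c w) : k) * koszulSign U (c w) = 1 := by
      rw [← Int.cast_mul, koszulSign_mul_self, Int.cast_one]
    by_cases hwU : c w ∈ U
    · rw [Finset.sum_eq_single_of_mem w (Finset.mem_filter.mpr ⟨hw, hwU⟩)]
      · rw [if_neg (by simp), koszulSign_erase_self, ← mul_assoc, hsq, one_mul,
          Finset.insert_erase hwU, tsub_add_cancel_of_le]
        rw [Finsupp.single_le_iff]
        have := hw2 hwU
        omega
      · intro v hv hvw
        obtain ⟨hv, hvU⟩ := Finset.mem_filter.mp hv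
        rw [if_pos (Finset.mem_erase.mpr ⟨fun h => hvw (hca hv hw h.symm), hwU⟩), mul_zero]
    · have hsupp : (a + Finsupp.single w 1).support = a.support := by
        ext v
        simp only [Finsupp.mem_support_iff, Finsupp.add_apply, Finsupp.single_apply]
        split_ifs with h
        · subst h
          simpa using hw
        · simp
      have h0 : srCoeff (a + Finsupp.single w 1)
          (koszulD (colorSum k K c) _ f (insert (c w) U)) = 0 := by
        rw [hf, Pi.zero_apply, srCoeff_zero]
      rw [srCoeff_koszulD c (by rwa [hsupp]), hsupp] at h0
      have hfil : a.support.filter (c · ∈ insert (c w) U) =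
          insert w (a.support.filter (c · ∈ U)) := by
        ext v
        simp only [mem_filter, mem_insert]
        constructor
        · rintro ⟨hv, h | h⟩
          · exact Or.inl (hca hv hw h)
          · exact Or.inr ⟨hv, h⟩
        · rintro (rfl | ⟨hv, h⟩)
          · exact ⟨hw, Or.inl rfl⟩
          · exact ⟨hv, Or.inr h⟩
      have hself : koszulSign (insert (c w) U) (c w) = koszulSign U (c w) := by
        rw [← koszulSign_erase_self, Finset.erase_insert hwU]
      rw [hfil, Finset.sum_insert (by simp [hwU]), Finset.erase_insert hwU,
        add_tsub_cancel_right, hself] at h0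
      have hterm : ∀ v ∈ a.support.filter (c · ∈ U), (koszulSign U (c v) : k) *
          (if c w ∈ U.erase (c v) then 0 else (koszulSign (U.erase (c v)) (c w) : k) *
            srCoeff (a - Finsupp.single v 1 + Finsupp.single w 1)
              (f (insert (c w) (U.erase (c v))))) =
          - (koszulSign U (c w) : k) * ((koszulSign (insert (c w) U) (c v) : k) *
            srCoeff (a + Finsupp.single w 1 - Finsupp.single v 1)
              (f ((insert (c w) U).erase (c v)))) := by
        intro v hv
        obtain ⟨hv, hvU⟩ := Finset.mem_filter.mp hv
        have hne : c w ≠ c v := fun h => hwU (h ▸ hvU)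
        have herase : (insert (c w) U).erase (c v) = insert (c w) (U.erase (c v)) :=
          Finset.erase_insert_of_ne hne
        have hself' : koszulSign (insert (c w) (U.erase (c v))) (c w) =
            koszulSign (U.erase (c v)) (c w) := by
          rw [← koszulSign_erase_self, Finset.erase_insert (by simp [hwU])]
        have hanti := koszulSign_anticomm (U := insert (c w) U) (i := c v) (j := c w)
          (by simp [hvU]) (by simp) hne.symm
        rw [herase, hself', Finset.erase_insert hwU, hself] at hanti
        have hantik : (koszulSign (insert (c w) U) (c v) : k) * koszulSign (U.erase (c v)) (c w) =
            -(koszulSign U (c w) * koszulSign U (c v)) := by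
          rw [← Int.cast_mul, hanti, Int.cast_neg, Int.cast_mul]
        have hsq' : (koszulSign (U.erase (c v)) (c w) : k) * koszulSign (U.erase (c v)) (c w)
            = 1 := by
          rw [← Int.cast_mul, koszulSign_mul_self, Int.cast_one]
        rw [if_neg (fun h => hwU (Finset.mem_of_mem_erase h)), herase,
          tsub_add_eq_add_tsub (by
            rw [Finsupp.single_le_iff]
            rw [Finsupp.mem_support_iff] at hv
            omega)]
        generalize srCoeff (k := k) (K := K) (a + Finsupp.single w 1 - Finsupp.single v 1) _ = x
        linear_combination x * koszulSign U (c w) * koszulSign (U.erase (c v)) (c w) * hantik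
          - x * koszulSign U (c w) * koszulSign (insert (c w) U) (c v) * hsq'
          - x * koszulSign U (c v) * koszulSign (U.erase (c v)) (c w) * hsq
      rw [Finset.sum_congr rfl hterm, ← Finset.mul_sum]
      linear_combination (- (koszulSign U (c w) : k)) * h0 + srCoeff a (f U) * hsq
  · have hB' : ∀ v ∈ a.support, a v = 1 ∧ c v ∈ U := fun v hv => by
      have hv' : ¬ (c v ∈ U → 2 ≤ a v) := fun h =>
        hB ⟨v, Finset.mem_filter.mpr ⟨hv, h⟩⟩
      rw [Finsupp.mem_support_iff] at hv
      push Not at hv'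
      exact ⟨by omega, hv'.1⟩
    simp only [boundingCoeff, dif_neg hB]
    have hsub : a.support.image c ⊆ U := Finset.image_subset_iff.mpr fun v hv => (hB' v hv).2
    have hS : ∀ v ∈ a.support, c v ∉ U \ a.support.image c := fun v hv h =>
      (Finset.mem_sdiff.mp h).2 (Finset.mem_image_of_mem _ hv)
    have hUS : a.support.image c ∪ U \ a.support.image c = U := Finset.union_sdiff_of_subset hsub
    have hψa := hψ (U \ a.support.image c) a.support ha hS (by
      rw [Finset.card_sdiff_of_subset hsub, Finset.card_image_of_injOn hca, hU]
      have := Finset.card_le_card hsub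
      rw [Finset.card_image_of_injOn hca, hU] at this
      omega)
    rw [hUS, sqfree_support_eq fun v hv => (hB' v hv).1] at hψa
    rw [Finset.filter_true_of_mem fun v hv => (hB' v hv).2, ← hψa]
    refine Finset.sum_congr rfl fun v hv => ?_
    rw [support_sub_single_of_eq_one (hB' v hv).1]
    congr 2
    ext j
    simp only [mem_sdiff, mem_erase, mem_image]
    constructor
    · rintro ⟨⟨hj, hjU⟩, h⟩
      exact ⟨hjU, fun ⟨w, hw, hwj⟩ => h ⟨w, ⟨fun hwv => hj (by rw [← hwj, hwv]), hw⟩, hwj⟩⟩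
    · rintro ⟨hjU, h⟩
      exact ⟨⟨fun hj => h ⟨v, hv, hj.symm⟩, hjU⟩, fun ⟨w, hw, hwj⟩ => h ⟨w, hw.2, hwj⟩⟩

lemma koszulVanish_iff_hVanish (hc : ∀ F ∈ K.faces, Set.InjOn c F) {p : ℕ} :
    KoszulVanish (colorSum k K c) (SRRing k K) p ↔
      ∀ (S : Finset ι) (i : ℕ), i + #S = p →
        HVanish k (K.restrict (univ.filter (c · ∉ S))) i := by
  have key : ∀ (S : Finset ι) (i : ℕ), HVanish k (K.restrict (univ.filter (c · ∉ S))) i ↔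
      CochainVanish k (K.restrict (univ.filter (c · ∉ S)))
        (fun F v => koszulSign (F.image c ∪ S) (c v)) i := fun S i => by
    rw [hVanish_iff_cochainVanish]
    refine cochainVanish_iff_of_rescale (shuffleSign_mul_self c S) fun F hF v hv => ?_
    obtain ⟨hF, hFS⟩ := mem_restrict_iff.mp hF
    exact koszulSign_mul_shuffleSign c (hc F hF) hFS hv
  simp only [key]
  exact ⟨fun h S i hp => cochainVanish_of_koszulVanish hc h hp, koszulVanish_of_cochainVanish hc⟩

end ColorKoszul

end SComplex

namespace SComplex

section Depth

lemma not_isRegular_of_subsingleton {R : Type} [CommRing R] [Subsingleton R] (rs : List R) :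
    ¬ RingTheory.Sequence.IsRegular R rs := fun h => h.top_ne_smul (Subsingleton.elim _ _)

lemma depthIn_bot (R : Type) [CommRing R] : depthIn R ⊥ = 0 := by
  rw [depthIn, ← Nat.le_zero]
  refine csSup_le' ?_
  rintro _ ⟨rs, rfl, hrs, hreg⟩
  cases rs with
  | nil => exact le_rfl
  | cons r rs =>
    exfalso
    have hr : r = 0 := hrs r List.mem_cons_self
    rcases subsingleton_or_nontrivial R with _ | _
    · exact not_isRegular_of_subsingleton _ hreg
    · subst hr
      have h := ((RingTheory.Sequence.isWeaklyRegular_cons_iff R (0 : R) rs).mp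
        hreg.toIsWeaklyRegular).1
      exact one_ne_zero (h (by simp : (0 : R) • (1 : R) = (0 : R) • 0))

variable {V : Type} [DecidableEq V] {k : Type} [Field k] {K : SComplex V}

lemma srDepth_eq_zero_of_faces_eq_empty (hK : K.faces = ∅) : srDepth k K = 0 := by
  have : Subsingleton (SRRing k K) := ⟨fun r s => srCoeff_ext fun a ha => by simp [hK] at ha⟩
  rw [srDepth, Subsingleton.elim (Ideal.span _) ⊥, depthIn_bot]

lemma mk_X_eq_zero {v : V} (hv : {v} ∉ K.faces) :
    Ideal.Quotient.mk (srIdeal k K) (MvPolynomial.X v) = 0 := by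
  rw [Ideal.Quotient.eq_zero_iff_mem]
  exact Ideal.subset_span ⟨{v}, hv, Finset.prod_singleton _ _⟩

lemma mk_X_mul_mk_X_eq_zero {v w : V} (hvw : v ≠ w) (h : {v, w} ∉ K.faces) :
    Ideal.Quotient.mk (srIdeal k K) (MvPolynomial.X v) *
      Ideal.Quotient.mk (srIdeal k K) (MvPolynomial.X w) = 0 := by
  rw [← map_mul, Ideal.Quotient.eq_zero_iff_mem]
  exact Ideal.subset_span ⟨{v, w}, h, Finset.prod_pair hvw⟩

lemma restrict_congr {W W' : Finset V} (h : ∀ v, {v} ∈ K.faces → (v ∈ W ↔ v ∈ W')) :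
    K.restrict W = K.restrict W' := by
  simp only [restrict, SComplex.mk.injEq]
  refine Finset.filter_congr fun F hF => forall₂_congr fun v hv => h v ?_
  exact K.down_closed hF (Finset.singleton_subset_iff.mpr hv)

variable [Fintype V]

lemma hVanish_of_faces_eq_empty (hK : K.faces = ∅) (i : ℕ) : HVanish k K i :=
  (hVanish_iff_cochainVanish i).mpr fun _ _ => ⟨0, fun F hF => by simp [hK] at hF⟩

lemma not_hVanish_zero (hK : K.faces = {∅}) : ¬ HVanish k K 0 := by
  rw [hVanish_iff_cochainVanish]
  intro h
  obtain ⟨ψ, hψ⟩ := h (fun _ => 1) fun F hF hcard => by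
    rw [hK, Finset.mem_singleton] at hF
    simp [hF] at hcard
  have := hψ ∅ (by simp [hK]) rfl
  simp at this

/-- The depth of `k[Δ]` in terms of the reduced homology of the subcomplexes obtained by
deleting colours, for a proper vertex colouring `c` of `Δ`. -/
theorem srDepth_eq_sInf_of_injOn {ι : Type} [LinearOrder ι] [Fintype ι] {c : V → ι}
    (hc : ∀ F ∈ K.faces, Set.InjOn c F) :
    srDepth k K = sInf {n : ℕ | ∃ (i : ℕ) (S : Finset ι),
      n = i + #S ∧ ¬ HVanish k (K.restrict (univ.filter (c · ∉ S))) i} := by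
  rcases K.faces.eq_empty_or_nonempty with hK | ⟨F₀, hF₀⟩
  · rw [srDepth_eq_zero_of_faces_eq_empty hK, eq_comm, Nat.sInf_eq_zero]
    refine Or.inr (Set.eq_empty_of_forall_notMem ?_)
    rintro _ ⟨i, S, -, h⟩
    exact h (hVanish_of_faces_eq_empty (by simp [restrict, hK]) i)
  have hempty : ∅ ∈ K.faces := K.down_closed hF₀ (Finset.empty_subset _)
  have hset : {n : ℕ | ∃ (i : ℕ) (S : Finset ι),
      n = i + #S ∧ ¬ HVanish k (K.restrict (univ.filter (c · ∉ S))) i} =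
      {p | ¬ KoszulVanish (colorSum k K c) (SRRing k K) p} := by
    ext p
    simp only [Set.mem_ofPred_eq, koszulVanish_iff_hVanish hc, not_forall]
    constructor
    · rintro ⟨i, S, h, hv⟩
      exact ⟨S, i, h.symm, hv⟩
    · rintro ⟨S, i, h, hv⟩
      exact ⟨i, S, h.symm, hv⟩
  have hX : ∀ v, Ideal.Quotient.mk (srIdeal k K) (MvPolynomial.X v) ∈ Ideal.span
      (Set.range fun v : V => Ideal.Quotient.mk (srIdeal k K) (MvPolynomial.X v)) :=
    fun v => Ideal.subset_span ⟨v, rfl⟩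
  rw [hset, srDepth]
  refine depthIn_eq_sInf_koszul _ ?_ (fun j => Ideal.sum_mem _ fun v _ => hX v) ?_ ?_
  · have h0 : ∀ r ∈ Ideal.span
        (Set.range fun v : V => Ideal.Quotient.mk (srIdeal k K) (MvPolynomial.X v)),
        srCoeff 0 r = 0 := fun r hr => by
      induction hr using Submodule.span_induction with
      | mem x hx =>
        obtain ⟨v, rfl⟩ := hx
        rw [srCoeff_mk (by simpa using hempty), MvPolynomial.coeff_zero_X]
      | zero => exact srCoeff_zero 0
      | add x y _ _ hx hy => rw [srCoeff_add, hx, hy, add_zero]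
      | smul r x _ hx =>
        obtain ⟨p, rfl⟩ := Ideal.Quotient.mk_surjective r
        obtain ⟨q, rfl⟩ := Ideal.Quotient.mk_surjective x
        have he : (0 : V →₀ ℕ).support ∈ K.faces := by simpa using hempty
        rw [srCoeff_mk he] at hx
        rw [smul_eq_mul, ← map_mul, srCoeff_mk he]
        rw [← MvPolynomial.constantCoeff_eq] at hx ⊢
        rw [map_mul, hx, mul_zero]
    intro htop
    have h1 := h0 1 (htop ▸ Submodule.mem_top)
    rw [← map_one (Ideal.Quotient.mk (srIdeal k K)), srCoeff_mk (by simpa using hempty)] at h1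
    simp at h1
  · rw [Ideal.span_le]
    rintro _ ⟨v, rfl⟩
    refine ⟨2, ?_⟩
    have hmul : Ideal.Quotient.mk (srIdeal k K) (MvPolynomial.X v) * colorSum k K c (c v) =
        Ideal.Quotient.mk (srIdeal k K) (MvPolynomial.X v) ^ 2 := by
      rw [colorSum, Finset.mul_sum, Finset.sum_eq_single_of_mem v (by simp), sq]
      intro w hw hwv
      refine mk_X_mul_mk_X_eq_zero hwv.symm fun h => hwv ?_
      exact hc _ h (by simp) (by simp) (Finset.mem_filter.mp hw).2
    rw [← hmul]
    exact Ideal.mul_mem_left _ _ (Ideal.subset_span ⟨c v, rfl⟩)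
  · refine ⟨#(univ : Finset ι), fun h => ?_⟩
    refine not_hVanish_zero ?_ ((koszulVanish_iff_hVanish hc).mp h univ 0 (zero_add _))
    ext F
    rw [mem_restrict_iff, Finset.mem_singleton]
    constructor
    · rintro ⟨-, h⟩
      exact Finset.eq_empty_of_forall_notMem fun v hv => h v hv (Finset.mem_univ _)
    · rintro rfl
      exact ⟨hempty, by simp⟩

lemma srDepth_eq_sInf_of_forall_notMem (hV : ∀ v, {v} ∉ K.faces) {α : Type}
    (W : Finset α → Finset V) :
    srDepth k K = sInf {n : ℕ | ∃ (i : ℕ) (S : Finset α),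
      n = i + #S ∧ ¬ HVanish k (K.restrict (W S)) i} := by
  have hF : ∀ F ∈ K.faces, F = ∅ := fun F hF => Finset.eq_empty_of_forall_notMem fun v hv =>
    hV v (K.down_closed hF (Finset.singleton_subset_iff.mpr hv))
  have hbot : Ideal.span
      (Set.range fun v : V => Ideal.Quotient.mk (srIdeal k K) (MvPolynomial.X v)) = ⊥ := by
    rw [Ideal.span_eq_bot]
    rintro _ ⟨v, rfl⟩
    exact mk_X_eq_zero (hV v)
  rw [srDepth, hbot, depthIn_bot, eq_comm, Nat.sInf_eq_zero]
  by_cases hempty : ∅ ∈ K.faces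
  · refine Or.inl ⟨0, ∅, rfl, not_hVanish_zero ?_⟩
    ext F
    simp only [restrict, Finset.mem_filter, Finset.mem_singleton]
    exact ⟨fun h => hF F h.1, fun h => h ▸ ⟨hempty, Finset.empty_subset _⟩⟩
  · refine Or.inr (Set.eq_empty_of_forall_notMem ?_)
    rintro _ ⟨i, S, -, h⟩
    refine h (hVanish_of_faces_eq_empty (Finset.eq_empty_of_forall_notMem fun F hF' => ?_) i)
    have hFK := (Finset.mem_filter.mp hF').1
    exact hempty (hF F hFK ▸ hFK)

end Depth

end SComplex

/-- For a balanced simplicial complex `(Δ, π)` of dimension `d - 1`,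
`depth k[Δ] = min { i + |S| : S ⊆ [d], H̃_{i-1}(Δ_{[d]-S}; k) ≠ 0 }`. -/
theorem balanced_depth_formula {V : Type} [DecidableEq V] [Fintype V] (k : Type) [Field k]
    (K : SComplex V) (d : ℕ) (π : Fin d → Finset V)
    (hrank : K.rank = d)
    (hdisj : ∀ i j : Fin d, i ≠ j → Disjoint (π i) (π j))
    (hcover : ∀ v : V, ({v} : Finset V) ∈ K.faces ↔ ∃ i, v ∈ π i)
    (hbal : ∀ F ∈ K.faces, ∀ i : Fin d, (F ∩ π i).card ≤ 1)
    :
    SComplex.srDepth k K = sInf {n : ℕ | ∃ (i : ℕ) (S : Finset (Fin d)),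
      n = i + S.card ∧ ¬ SComplex.HVanish k (K.restrict (Sᶜ.biUnion π)) i} := by
  by_cases hd : Nonempty (Fin d)
  swap
  · exact SComplex.srDepth_eq_sInf_of_forall_notMem
      (fun v hv => hd ⟨((hcover v).mp hv).choose⟩) _
  have hex : ∀ v, ∃ i, {v} ∈ K.faces → v ∈ π i := fun v => by
    by_cases hv : {v} ∈ K.faces
    · obtain ⟨i, hi⟩ := (hcover v).mp hv
      exact ⟨i, fun _ => hi⟩
    · exact ⟨hd.some, fun h => absurd h hv⟩
  choose c hcπ using hex
  have hc : ∀ F ∈ K.faces, Set.InjOn c F := fun F hF v hv w hw hvw => by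
    have hπ : ∀ u ∈ F, u ∈ π (c u) := fun u hu =>
      hcπ u (K.down_closed hF (Finset.singleton_subset_iff.mpr hu))
    exact Finset.card_le_one.mp (hbal F hF (c v)) v (Finset.mem_inter.mpr ⟨hv, hπ v hv⟩) w
      (Finset.mem_inter.mpr ⟨hw, hvw ▸ hπ w hw⟩)
  have hrestrict : ∀ S : Finset (Fin d), K.restrict (Sᶜ.biUnion π) =
      K.restrict (univ.filter (c · ∉ S)) := fun S => by
    refine SComplex.restrict_congr fun v hv => ?_
    simp only [Finset.mem_biUnion, Finset.mem_compl, Finset.mem_filter, Finset.mem_univ, true_and]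
    refine ⟨fun ⟨i, hi, hvi⟩ h => ?_, fun h => ⟨c v, h, hcπ v hv⟩⟩
    have hne : c v ≠ i := fun h' => hi (h' ▸ h)
    exact Finset.disjoint_left.mp (hdisj _ _ hne) (hcπ v hv) hvi
  simp only [hrestrict]
  exact SComplex.srDepth_eq_sInf_of_injOn hc
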